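/- Let k be a field, R = k[X]/(X^7), and B = k[X]/(X^7) ⊕ k[X]/(X^6) ⊕ k[X]/(X^4) ⊕ k[X]/(X^3) ⊕ k[X]/(X), regarded as an R-module, with e₁, …, e₅ the canonical generators of the five summands. For λ ∈ k let A_λ be the R-submodule of B generated by u₁ = X^4 e₁ + X e₄ + e₅, u₂ = X^3 e₂ + X^2 e₃ + e₅, and u₃ = X^3 e₃ + λ X^2 e₄. Then X^3·A_λ = 0, so (A_λ, B) is an object of S_3(k[T]/T^7); each pair (A_λ, B) is indecomposable, and for λ, μ ∈ k with λ ≠ μ the pairs (A_λ, B) and (A_μ, B) are not isomorphic. -/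

import Mathlib

open Polynomial

noncomputable section

/-- The cyclic module `k[X]/(Xⁱ)`, as a module over `k[X]`; modules over `k[X]` annihilated
by `Xⁿ` are exactly the modules over `R = k[X]/(Xⁿ)`. -/
abbrev Bq (k : Type) [Field k] (i : ℕ) : Type :=
  Polynomial k ⧸ (Ideal.span {(X : Polynomial k) ^ i} : Ideal (Polynomial k))

/-- Indecomposability of a pair (submodule of a module). -/
def PairIndec {k : Type} [Field k] (B : Type) [AddCommGroup B] [Module (Polynomial k) B]
    (A : Submodule (Polynomial k) B) : Prop :=
  (∃ b : B, b ≠ 0) ∧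
    ∀ B₁ B₂ : Submodule (Polynomial k) B,
      B₁ ⊓ B₂ = ⊥ → B₁ ⊔ B₂ = ⊤ → A = A ⊓ B₁ ⊔ A ⊓ B₂ → B₁ = ⊥ ∨ B₂ = ⊥

/-- Isomorphism of pairs over a common ambient module: a linear automorphism carrying the
one submodule onto the other. -/
def PairIso {k : Type} [Field k] (B : Type) [AddCommGroup B] [Module (Polynomial k) B]
    (A A' : Submodule (Polynomial k) B) : Prop :=
  ∃ e : B ≃ₗ[Polynomial k] B, A.map e.toLinearMap = A'

/-- `B = k[X]/(X⁷) ⊕ k[X]/(X⁶) ⊕ k[X]/(X⁴) ⊕ k[X]/(X³) ⊕ k[X]/(X)`. -/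
abbrev B9 (k : Type) [Field k] : Type := Bq k 7 × Bq k 6 × Bq k 4 × Bq k 3 × Bq k 1

/-- `u₁ = X⁴e₁ + Xe₄ + e₅`. -/
def u₁ (k : Type) [Field k] : B9 k :=
  (Submodule.Quotient.mk (X ^ 4), 0, 0, Submodule.Quotient.mk X, Submodule.Quotient.mk 1)

/-- `u₂ = X³e₂ + X²e₃ + e₅`. -/
def u₂ (k : Type) [Field k] : B9 k :=
  (0, Submodule.Quotient.mk (X ^ 3), Submodule.Quotient.mk (X ^ 2), 0, Submodule.Quotient.mk 1)

/-- `u₃ = X³e₃ + λX²e₄`. -/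
def u₃ (k : Type) [Field k] (l : k) : B9 k :=
  (0, 0, Submodule.Quotient.mk (X ^ 3), Submodule.Quotient.mk (C l * X ^ 2), 0)

/-- `A_λ = ⟨u₁, u₂, u₃⟩ ⊆ B`. -/
def A9 (k : Type) [Field k] (l : k) : Submodule (Polynomial k) (B9 k) :=
  Submodule.span (Polynomial k) {u₁ k, u₂ k, u₃ k l}

/-- Vector with polynomial representatives. -/
def VV (k : Type) [Field k] (p₁ p₂ p₃ p₄ p₅ : Polynomial k) : B9 k :=
  (Submodule.Quotient.mk p₁, Submodule.Quotient.mk p₂, Submodule.Quotient.mk p₃,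
    Submodule.Quotient.mk p₄, Submodule.Quotient.mk p₅)

theorem mk_eq_iff (k : Type) [Field k] (n : ℕ) (p q : Polynomial k) :
    (Submodule.Quotient.mk p : Bq k n) = Submodule.Quotient.mk q ↔
      ∀ d < n, p.coeff d = q.coeff d := by
  have := Submodule.Quotient.eq (Ideal.span {(X : Polynomial k) ^ n}) (x := p) (y := q)
  refine this.trans ?_
  rw [Ideal.mem_span_singleton, X_pow_dvd_iff]
  simp [sub_eq_zero]

theorem VV_surj {k : Type} [Field k] (b : B9 k) : ∃ p₁ p₂ p₃ p₄ p₅, b = VV k p₁ p₂ p₃ p₄ p₅ := by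
  obtain ⟨b₁, b₂, b₃, b₄, b₅⟩ := b
  obtain ⟨p₁, rfl⟩ := Submodule.Quotient.mk_surjective _ b₁
  obtain ⟨p₂, rfl⟩ := Submodule.Quotient.mk_surjective _ b₂
  obtain ⟨p₃, rfl⟩ := Submodule.Quotient.mk_surjective _ b₃
  obtain ⟨p₄, rfl⟩ := Submodule.Quotient.mk_surjective _ b₄
  obtain ⟨p₅, rfl⟩ := Submodule.Quotient.mk_surjective _ b₅
  exact ⟨p₁, p₂, p₃, p₄, p₅, rfl⟩

theorem VV_add {k : Type} [Field k] (p₁ p₂ p₃ p₄ p₅ q₁ q₂ q₃ q₄ q₅ : Polynomial k) :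
    VV k p₁ p₂ p₃ p₄ p₅ + VV k q₁ q₂ q₃ q₄ q₅ =
      VV k (p₁ + q₁) (p₂ + q₂) (p₃ + q₃) (p₄ + q₄) (p₅ + q₅) := rfl

theorem VV_smul {k : Type} [Field k] (r p₁ p₂ p₃ p₄ p₅ : Polynomial k) :
    r • VV k p₁ p₂ p₃ p₄ p₅ = VV k (r * p₁) (r * p₂) (r * p₃) (r * p₄) (r * p₅) := rfl

theorem VV_zero {k : Type} [Field k] : (0 : B9 k) = VV k 0 0 0 0 0 := rfl

theorem VV_eq {k : Type} [Field k] (p₁ p₂ p₃ p₄ p₅ q₁ q₂ q₃ q₄ q₅ : Polynomial k) :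
    VV k p₁ p₂ p₃ p₄ p₅ = VV k q₁ q₂ q₃ q₄ q₅ ↔
      (∀ d < 7, p₁.coeff d = q₁.coeff d) ∧ (∀ d < 6, p₂.coeff d = q₂.coeff d) ∧
      (∀ d < 4, p₃.coeff d = q₃.coeff d) ∧ (∀ d < 3, p₄.coeff d = q₄.coeff d) ∧
      (∀ d < 1, p₅.coeff d = q₅.coeff d) := by
  unfold VV
  rw [Prod.mk.injEq, Prod.mk.injEq, Prod.mk.injEq, Prod.mk.injEq]
  simp only [mk_eq_iff]

theorem u₁_eq (k : Type) [Field k] : u₁ k = VV k (X ^ 4) 0 0 X 1 := rfl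
theorem u₂_eq (k : Type) [Field k] : u₂ k = VV k 0 (X ^ 3) (X ^ 2) 0 1 := rfl
theorem u₃_eq (k : Type) [Field k] (l : k) : u₃ k l = VV k 0 0 (X ^ 3) (C l * X ^ 2) 0 := rfl

theorem all7 (P : ℕ → Prop) : (∀ d < 7, P d) ↔ P 0 ∧ P 1 ∧ P 2 ∧ P 3 ∧ P 4 ∧ P 5 ∧ P 6 := by
  constructor
  · intro h; simp [h]
  · rintro ⟨_, _, _, _, _, _, _⟩ d hd
    interval_cases d <;> assumption
theorem all6 (P : ℕ → Prop) : (∀ d < 6, P d) ↔ P 0 ∧ P 1 ∧ P 2 ∧ P 3 ∧ P 4 ∧ P 5 := by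
  constructor
  · intro h; simp [h]
  · rintro ⟨_, _, _, _, _, _⟩ d hd
    interval_cases d <;> assumption
theorem all4 (P : ℕ → Prop) : (∀ d < 4, P d) ↔ P 0 ∧ P 1 ∧ P 2 ∧ P 3 := by
  constructor
  · intro h; simp [h]
  · rintro ⟨_, _, _, _⟩ d hd
    interval_cases d <;> assumption
theorem all3 (P : ℕ → Prop) : (∀ d < 3, P d) ↔ P 0 ∧ P 1 ∧ P 2 := by
  constructor
  · intro h; simp [h]
  · rintro ⟨_, _, _⟩ d hd
    interval_cases d <;> assumption
theorem all1 (P : ℕ → Prop) : (∀ d < 1, P d) ↔ P 0 := by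
  constructor
  · intro h; simp [h]
  · rintro _ d hd
    interval_cases d ; assumption

theorem X_coeff {k : Type} [Field k] (d : ℕ) (p : Polynomial k) :
    (X * p).coeff d = if 1 ≤ d then p.coeff (d - 1) else 0 := by
  simpa using coeff_X_pow_mul' p 1 d

theorem coeff_X' {k : Type} [Field k] (d : ℕ) (p : Polynomial k) :
    (p * X).coeff d = if 1 ≤ d then p.coeff (d - 1) else 0 := by
  simpa using coeff_mul_X_pow' p 1 d

/-- the socle of `B` -/
theorem socle {k : Type} [Field k] (b : B9 k) (hb : (X : Polynomial k) • b = 0) :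
    ∃ c₁ c₂ c₃ c₄ c₅ : k, b = (C c₁ : Polynomial k) • VV k (X ^ 6) 0 0 0 0 +
      (C c₂ : Polynomial k) • VV k 0 (X ^ 5) 0 0 0 +
      (C c₃ : Polynomial k) • VV k 0 0 (X ^ 3) 0 0 + (C c₄ : Polynomial k) • VV k 0 0 0 (X ^ 2) 0 +
      (C c₅ : Polynomial k) • VV k 0 0 0 0 1 := by
  obtain ⟨p₁, p₂, p₃, p₄, p₅, rfl⟩ := VV_surj b
  refine ⟨p₁.coeff 6, p₂.coeff 5, p₃.coeff 3, p₄.coeff 2, p₅.coeff 0, ?_⟩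
  simp only [VV_zero, VV_smul, VV_add, VV_eq, all7, all6, all4, all3, all1] at hb ⊢
  simp [X_coeff, coeff_X_pow] at hb ⊢
  simp [hb]

theorem key {k : Type} [Field k] (l m : k) (f : B9 k →ₗ[Polynomial k] B9 k)
    (hf : ∀ x ∈ A9 k l, f x ∈ A9 k m) :
    ∃ a : k, l * a = m * a ∧
      f (VV k (X ^ 6) 0 0 0 0) = (C a : Polynomial k) • VV k (X ^ 6) 0 0 0 0 ∧
      (a = 0 → (∃ c₁ : k,
        f (VV k 0 (X ^ 5) 0 0 0) = (C c₁ : Polynomial k) • VV k (X ^ 6) 0 0 0 0) ∧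
        (∃ c₁ c₂ : k,
        f (VV k 0 0 (X ^ 3) 0 0) = (C c₁ : Polynomial k) • VV k (X ^ 6) 0 0 0 0 +
          (C c₂ : Polynomial k) • VV k 0 (X ^ 5) 0 0 0) ∧
        (∃ c₁ c₂ c₃ : k,
        f (VV k 0 0 0 (X ^ 2) 0) = (C c₁ : Polynomial k) • VV k (X ^ 6) 0 0 0 0 +
          (C c₂ : Polynomial k) • VV k 0 (X ^ 5) 0 0 0 +
          (C c₃ : Polynomial k) • VV k 0 0 (X ^ 3) 0 0) ∧
        (∃ c₁ c₂ c₃ c₄ : k,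
        f (VV k 0 0 0 0 1) = (C c₁ : Polynomial k) • VV k (X ^ 6) 0 0 0 0 +
          (C c₂ : Polynomial k) • VV k 0 (X ^ 5) 0 0 0 +
          (C c₃ : Polynomial k) • VV k 0 0 (X ^ 3) 0 0 +
          (C c₄ : Polynomial k) • VV k 0 0 0 (X ^ 2) 0)) := by
  obtain ⟨p11, p21, p31, p41, p51, h1⟩ := VV_surj (f (VV k 1 0 0 0 0))
  obtain ⟨p12, p22, p32, p42, p52, h2⟩ := VV_surj (f (VV k 0 1 0 0 0))
  obtain ⟨p13, p23, p33, p43, p53, h3⟩ := VV_surj (f (VV k 0 0 1 0 0))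
  obtain ⟨p14, p24, p34, p44, p54, h4⟩ := VV_surj (f (VV k 0 0 0 1 0))
  obtain ⟨p15, p25, p35, p45, p55, h5⟩ := VV_surj (f (VV k 0 0 0 0 1))
  have fV : ∀ q₁ q₂ q₃ q₄ q₅ : Polynomial k, f (VV k q₁ q₂ q₃ q₄ q₅) =
      q₁ • VV k p11 p21 p31 p41 p51 + q₂ • VV k p12 p22 p32 p42 p52 +
      q₃ • VV k p13 p23 p33 p43 p53 + q₄ • VV k p14 p24 p34 p44 p54 +
      q₅ • VV k p15 p25 p35 p45 p55 := by
    intro q₁ q₂ q₃ q₄ q₅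
    rw [← h1, ← h2, ← h3, ← h4, ← h5]
    simp only [← map_smul, ← map_add, VV_smul, VV_add]
    simp
  have r2 : f ((X ^ 6 : Polynomial k) • VV k 0 1 0 0 0) = 0 := by
    rw [show (X ^ 6 : Polynomial k) • VV k 0 1 0 0 0 = 0 from by
      simp only [VV_zero, VV_smul, VV_eq]
      simp +contextual [coeff_X_pow, ne_of_lt], map_zero]
  have r3 : f ((X ^ 4 : Polynomial k) • VV k 0 0 1 0 0) = 0 := by
    rw [show (X ^ 4 : Polynomial k) • VV k 0 0 1 0 0 = 0 from by
      simp only [VV_zero, VV_smul, VV_eq]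
      simp +contextual [coeff_X_pow, ne_of_lt], map_zero]
  have r4 : f ((X ^ 3 : Polynomial k) • VV k 0 0 0 1 0) = 0 := by
    rw [show (X ^ 3 : Polynomial k) • VV k 0 0 0 1 0 = 0 from by
      simp only [VV_zero, VV_smul, VV_eq]
      simp +contextual [coeff_X_pow, ne_of_lt], map_zero]
  have r5 : f ((X ^ 1 : Polynomial k) • VV k 0 0 0 0 1) = 0 := by
    rw [show (X ^ 1 : Polynomial k) • VV k 0 0 0 0 1 = 0 from by
      simp only [VV_zero, VV_smul, VV_eq]
      simp +contextual , map_zero]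
  rw [map_smul, h2] at r2
  rw [map_smul, h3] at r3
  rw [map_smul, h4] at r4
  rw [map_smul, h5] at r5
  have g1 := hf (u₁ k) (Submodule.subset_span (by simp))
  have g2 := hf (u₂ k) (Submodule.subset_span (by simp))
  have g3 := hf (u₃ k l) (Submodule.subset_span (by simp))
  rw [A9, Submodule.mem_span_triple] at g1 g2 g3
  obtain ⟨a, b, c, g1⟩ := g1
  obtain ⟨a', b', c', g2⟩ := g2
  obtain ⟨a'', b'', c'', g3⟩ := g3
  rw [u₁_eq, u₂_eq, u₃_eq, fV] at g1 g2
  simp only [u₁_eq, u₂_eq, u₃_eq, fV] at g3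
  simp only [VV_zero, VV_smul, VV_add, VV_eq, all7, all6, all4, all3, all1] at r2 r3 r4 r5 g1 g2 g3
  simp only [fV]
  simp [coeff_X_pow_mul', X_coeff] at r2 r3 r4 r5
  simp only [mul_left_comm _ (C _) (X^2), mul_assoc, coeff_add, coeff_X_pow_mul', coeff_mul_X_pow', X_coeff, coeff_X', coeff_C_mul, mul_zero, zero_mul, coeff_zero, add_zero, zero_add, mul_one, one_mul] at g1 g2 g3
  simp [r2, r3, r4, r5] at g1 g2 g3
  have e44 : p44.coeff 0 = p11.coeff 0 := by grind
  have e55 : p55.coeff 0 = p11.coeff 0 := by grind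
  have e33 : p33.coeff 0 = p11.coeff 0 := by grind
  have e22 : p22.coeff 0 = p11.coeff 0 := by grind
  refine ⟨p11.coeff 0, by grind, ?_, ?_⟩
  · simp only [VV_zero, VV_smul, VV_add, VV_eq, all7, all6, all4, all3, all1]
    simp [coeff_X_pow_mul', coeff_X_pow]
  intro h0
  rw [h0] at e22 e33 e44 e55
  refine ⟨⟨p12.coeff 1, ?_⟩, ⟨p13.coeff 3, p23.coeff 2, ?_⟩,
    ⟨p14.coeff 4, p24.coeff 3, p34.coeff 1, ?_⟩,
    ⟨p15.coeff 6, p25.coeff 5, p35.coeff 3, p45.coeff 2, ?_⟩⟩ <;>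
  · simp only [VV_zero, VV_smul, VV_add, VV_eq, all7, all6, all4, all3, all1]
    simp [coeff_X_pow_mul', coeff_X_pow, r2, r3, r4, r5, e22, e33, e44, e55]

theorem X7 {k : Type} [Field k] (b : B9 k) : (X : Polynomial k) ^ 7 • b = 0 := by
  obtain ⟨p₁, p₂, p₃, p₄, p₅, rfl⟩ := VV_surj b
  simp only [VV_zero, VV_smul, VV_eq, all7, all6, all4, all3, all1]
  simp [coeff_X_pow_mul']

theorem s1_ne {k : Type} [Field k] : VV k (X ^ 6) 0 0 0 0 ≠ 0 := by
  intro h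
  simp only [VV_zero, VV_eq] at h
  simpa using h.1 6

theorem idem_zero {k : Type} [Field k] (f : B9 k →ₗ[Polynomial k] B9 k)
    (hi : ∀ x, f (f x) = f x)
    (hs : ∀ y : B9 k, (X : Polynomial k) • y = 0 → f y = 0) (x : B9 k) : f x = 0 := by
  by_contra h
  have hex : ∃ n, (X : Polynomial k) ^ n • f x = 0 := ⟨7, X7 _⟩
  classical
  have h1 := Nat.find_spec hex
  rcases hn : Nat.find hex with _ | n
  · rw [hn] at h1; simp at h1; exact h h1
  · have h2 := Nat.find_min hex (m := n) (by omega)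
    rw [hn, pow_succ' (X : Polynomial k) n, mul_smul] at h1
    have := hs _ h1
    rw [map_smul, hi] at this
    exact h2 this

theorem idem_key {k : Type} [Field k] (l : k) (f : B9 k →ₗ[Polynomial k] B9 k)
    (hf : ∀ x ∈ A9 k l, f x ∈ A9 k l) (hi : ∀ x, f (f x) = f x) :
    (∀ x, f x = 0) ∨ f (VV k (X ^ 6) 0 0 0 0) = VV k (X ^ 6) 0 0 0 0 := by
  obtain ⟨a, -, h1, h⟩ := key l l f hf
  have ha : a * a = a := by
    have := hi (VV k (X ^ 6) 0 0 0 0)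
    rw [h1, map_smul, h1] at this
    simp only [VV_smul, VV_eq] at this
    simpa using this.1 6
  have ha' : a = 0 ∨ a = 1 := by grind
  rcases ha' with h0 | h0
  · left
    obtain ⟨⟨c₁, e2⟩, ⟨d₁, d₂, e3⟩, ⟨x₁, x₂, x₃, e4⟩, ⟨y₁, y₂, y₃, y₄, e5⟩⟩ := h h0
    have z1 : f (VV k (X ^ 6) 0 0 0 0) = 0 := by rw [h1, h0]; simp
    have z2 : f (VV k 0 (X ^ 5) 0 0 0) = 0 := by rw [← hi, e2]; simp [z1]
    have z3 : f (VV k 0 0 (X ^ 3) 0 0) = 0 := by rw [← hi, e3]; simp [z1, z2]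
    have z4 : f (VV k 0 0 0 (X ^ 2) 0) = 0 := by rw [← hi, e4]; simp [z1, z2, z3]
    have z5 : f (VV k 0 0 0 0 1) = 0 := by rw [← hi, e5]; simp [z1, z2, z3, z4]
    refine idem_zero f hi fun y hy => ?_
    obtain ⟨_, _, _, _, _, rfl⟩ := socle y hy
    simp [z1, z2, z3, z4, z5]
  · right
    rw [h1, h0]; simp

theorem family_S3_T7 (k : Type) [Field k] :
    Module.Finite (Polynomial k) (B9 k) ∧
    (∀ b : B9 k, (X : Polynomial k) ^ 7 • b = 0) ∧
    (∀ l : k, ∀ x ∈ A9 k l, (X : Polynomial k) ^ 3 • x = 0) ∧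
    (∀ l : k, PairIndec (B9 k) (A9 k l)) ∧
    (∀ l m : k, l ≠ m → ¬ PairIso (B9 k) (A9 k l) (A9 k m)) := by
  refine ⟨inferInstance, X7, ?_, ?_, ?_⟩
  · intro l x hx
    rw [A9, Submodule.mem_span_triple] at hx
    obtain ⟨a, b, c, rfl⟩ := hx
    simp only [u₁_eq, u₂_eq, u₃_eq, VV_zero, VV_smul, VV_add, VV_eq, all7, all6, all4, all3, all1]
    simp [coeff_X_pow_mul', mul_coeff_zero, coeff_X_pow, coeff_mul_X_pow']
  · intro l
    refine ⟨⟨_, s1_ne⟩, fun B₁ B₂ hinf hsup hA => ?_⟩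
    have hc : IsCompl B₁ B₂ := IsCompl.of_eq hinf hsup
    have hpA : ∀ x ∈ A9 k l, ∃ y ∈ A9 k l, ∃ z ∈ A9 k l, y ∈ B₁ ∧ z ∈ B₂ ∧ y + z = x := by
      intro x hx
      rw [hA] at hx
      obtain ⟨y, hy, z, hz, h⟩ := Submodule.mem_sup.1 hx
      exact ⟨y, hy.1, z, hz.1, hy.2, hz.2, h⟩
    have main : ∀ C₁ C₂ : Submodule (Polynomial k) (B9 k), ∀ hC : IsCompl C₁ C₂,
        (∀ x ∈ A9 k l, ∃ y ∈ A9 k l, ∃ z ∈ A9 k l, y ∈ C₁ ∧ z ∈ C₂ ∧ y + z = x) →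
        C₁ = ⊥ ∨ VV k (X ^ 6) 0 0 0 0 ∈ C₁ := by
      intro C₁ C₂ hC hx
      let f : B9 k →ₗ[Polynomial k] B9 k := C₁.subtype ∘ₗ C₁.projectionOnto C₂ hC
      have f1 : ∀ x ∈ C₁, f x = x := fun x hx => by
        exact congrArg Subtype.val (Submodule.projectionOnto_apply_left hC ⟨x, hx⟩)
      have f2 : ∀ x ∈ C₂, f x = 0 := fun x hx => by
        exact congrArg Subtype.val (Submodule.projectionOnto_apply_right hC ⟨x, hx⟩)
      have fm : ∀ x, f x ∈ C₁ := fun x => by simp [f]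
      rcases idem_key l f (fun x h => by
        obtain ⟨y, hy, z, hz, hy1, hz1, rfl⟩ := hx x h
        rw [map_add, f1 y hy1, f2 z hz1, add_zero]; exact hy) (fun x => f1 _ (fm x)) with h | h
      · left
        rw [Submodule.eq_bot_iff]
        intro x hx
        rw [← f1 x hx, h]
      · right
        rw [← h]; exact fm _
    rcases main B₁ B₂ hc hpA with h | h
    · exact Or.inl h
    rcases main B₂ B₁ hc.symm (fun x hx => by
      obtain ⟨y, hy, z, hz, hy1, hz1, h⟩ := hpA x hx
      exact ⟨z, hz, y, hy, hz1, hy1, by rw [add_comm, h]⟩) with h' | h'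
    · exact Or.inr h'
    exact absurd ((Submodule.mem_bot _).1 (hinf ▸ Submodule.mem_inf.2 ⟨h, h'⟩)) s1_ne
  · rintro l m hlm ⟨e, he⟩
    obtain ⟨a, h, h1, -⟩ := key l m e.toLinearMap (fun x hx => he ▸ Submodule.mem_map_of_mem hx)
    by_cases ha : a = 0
    · rw [ha] at h1
      simp only [C_0, zero_smul, LinearEquiv.coe_coe] at h1
      exact s1_ne ((LinearEquiv.map_eq_zero_iff e).1 h1)
    · exact hlm (mul_right_cancel₀ ha h)

end
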